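/- Let C be a category with pullbacks which has Kähler differentials, and let X be a formally unramified object of C. Then Ω_X is an initial object of Ab(C/X): for every Beck module M over X, the set Hom_{Ab(C/X)}(Ω_X, M) has exactly one element. -/

import Mathlib

open CategoryTheory CategoryTheory.Limits

universe v u

/-- A Beck module over `Y`: an abelian group object in the overcategory `C/Y`,
presented by its underlying morphism `φ : M ⟶ Y`, a unit (zero) section `unit`,
an addition `add` over `Y`, and a negation `neg` over `Y`, satisfying the abelian
group axioms on generalized elements (equivalently, via Yoneda, making it an
abelian group object of `C/Y`). -/
structure BeckModule {C : Type u} [Category.{v} C] [HasPullbacks C] (Y : C) where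
  M : C
  φ : M ⟶ Y
  unit : Y ⟶ M
  unit_φ : unit ≫ φ = 𝟙 Y
  add : pullback φ φ ⟶ M
  add_φ : add ≫ φ = pullback.fst φ φ ≫ φ
  neg : M ⟶ M
  neg_φ : neg ≫ φ = φ
  add_assoc : ∀ {T : C} (a b c : T ⟶ M) (hab : a ≫ φ = b ≫ φ) (hbc : b ≫ φ = c ≫ φ),
    pullback.lift (pullback.lift a b hab ≫ add) c
        (by rw [Category.assoc, add_φ, ← Category.assoc, pullback.lift_fst, hab, hbc]) ≫ add =
      pullback.lift a (pullback.lift b c hbc ≫ add)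
        (by rw [Category.assoc, add_φ, ← Category.assoc, pullback.lift_fst, hab]) ≫ add
  add_comm : ∀ {T : C} (a b : T ⟶ M) (h : a ≫ φ = b ≫ φ),
    pullback.lift a b h ≫ add = pullback.lift b a h.symm ≫ add
  zero_add : ∀ {T : C} (a : T ⟶ M),
    pullback.lift (a ≫ φ ≫ unit) a
        (by rw [Category.assoc, Category.assoc, unit_φ, Category.comp_id]) ≫ add = a
  add_neg : ∀ {T : C} (a : T ⟶ M),
    pullback.lift a (a ≫ neg) (by rw [Category.assoc, neg_φ]) ≫ add = a ≫ φ ≫ unit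

/-- A Beck torsor structure on `γ : Z ⟶ Y`: `γ` is an effective epimorphism, equipped
with a Beck module `mod` over `Y` and a group action `τ : M ×_Y Z ⟶ Z` in `C/Y`
(satisfying the unit and associativity axioms for an action of the group object `M`),
such that the shear morphism `(τ, π_Z) : M ×_Y Z ⟶ Z ×_Y Z` is an isomorphism in `C/Y`. -/
structure BeckTorsor {C : Type u} [Category.{v} C] [HasPullbacks C] {Z Y : C} (γ : Z ⟶ Y) where
  mod : BeckModule Y
  effEpi : EffectiveEpi γ
  τ : pullback mod.φ γ ⟶ Z
  τ_γ : τ ≫ γ = pullback.snd mod.φ γ ≫ γ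
  act_unit : ∀ {T : C} (z : T ⟶ Z),
    pullback.lift (z ≫ γ ≫ mod.unit) z
        (by rw [Category.assoc, Category.assoc, mod.unit_φ, Category.comp_id]) ≫ τ = z
  act_assoc : ∀ {T : C} (a b : T ⟶ mod.M) (z : T ⟶ Z)
      (hab : a ≫ mod.φ = b ≫ mod.φ) (hbz : b ≫ mod.φ = z ≫ γ),
    pullback.lift (pullback.lift a b hab ≫ mod.add) z
        (by rw [Category.assoc, mod.add_φ, ← Category.assoc, pullback.lift_fst, hab, hbz]) ≫ τ =
      pullback.lift a (pullback.lift b z hbz ≫ τ)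
        (by rw [Category.assoc, τ_γ, ← Category.assoc, pullback.lift_snd, hab, hbz]) ≫ τ
  shear_iso : IsIso (pullback.lift τ (pullback.snd mod.φ γ) τ_γ :
    pullback mod.φ γ ⟶ pullback γ γ)

/-- An object `X` is formally unramified if, for every Beck torsor `γ : Z ⟶ Y` in `C`,
the canonical map `Hom(X, Z) → Hom(X, Y)` given by composition with `γ` is injective. -/
def FormallyUnramified {C : Type u} [Category.{v} C] [HasPullbacks C] (X : C) : Prop :=
  ∀ ⦃Z Y : C⦄ (γ : Z ⟶ Y), BeckTorsor γ →
    Function.Injective (fun ψ : X ⟶ Z => ψ ≫ γ)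

/-- A morphism of Beck modules over `Y`: a morphism over `Y` commuting with the
addition (i.e. a morphism of abelian group objects in `C/Y`). -/
@[ext]
structure BeckModuleHom {C : Type u} [Category.{v} C] [HasPullbacks C] {Y : C}
    (N₁ N₂ : BeckModule Y) where
  f : N₁.M ⟶ N₂.M
  w : f ≫ N₂.φ = N₁.φ
  map_add : ∀ {T : C} (a b : T ⟶ N₁.M) (h : a ≫ N₁.φ = b ≫ N₁.φ),
    (pullback.lift a b h ≫ N₁.add) ≫ f =
      pullback.lift (a ≫ f) (b ≫ f)
        (by rw [Category.assoc, Category.assoc, w, h]) ≫ N₂.add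

/-- The category `Ab(C/Y)` of Beck modules over `Y`. -/
instance BeckModule.category {C : Type u} [Category.{v} C] [HasPullbacks C] (Y : C) :
    Category (BeckModule Y) where
  Hom := BeckModuleHom
  id N := ⟨𝟙 N.M, Category.id_comp _, by intro T a b h; simp⟩
  comp {N₁ N₂ N₃} f g := ⟨f.f ≫ g.f, by rw [Category.assoc, g.w, f.w], by
    intro T a b h
    rw [← Category.assoc, f.map_add, g.map_add]
    simp⟩
  id_comp f := by apply BeckModuleHom.ext; simp
  comp_id f := by apply BeckModuleHom.ext; simp
  assoc f g h := by apply BeckModuleHom.ext; simp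

/-- The forgetful functor `Ab(C/Y) ⥤ C/Y`. -/
def forgetBeck {C : Type u} [Category.{v} C] [HasPullbacks C] (Y : C) :
    BeckModule Y ⥤ Over Y where
  obj N := Over.mk N.φ
  map {N₁ N₂} f := Over.homMk f.f f.w
  map_id N := by ext; simp; rfl
  map_comp f g := by ext; simp; rfl

theorem BeckModule.shear_isIso {C : Type u} [Category.{v} C] [HasPullbacks C] {Y : C}
    (N : BeckModule Y) :
    IsIso (pullback.lift N.add (pullback.snd N.φ N.φ)
      (by rw [N.add_φ, pullback.condition]) : pullback N.φ N.φ ⟶ pullback N.φ N.φ) := by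
  have key : ∀ {T : C} (a b : T ⟶ N.M) (h : a ≫ N.φ = b ≫ N.φ),
      pullback.lift a b h ≫ pullback.lift N.add (pullback.snd N.φ N.φ)
        (by rw [N.add_φ, pullback.condition]) =
      pullback.lift (pullback.lift a b h ≫ N.add) b
        (by rw [Category.assoc, N.add_φ, ← Category.assoc, pullback.lift_fst, h]) := by
    intro T a b h
    apply pullback.hom_ext
    · rw [Category.assoc, pullback.lift_fst, pullback.lift_fst]
    · rw [Category.assoc, pullback.lift_snd, pullback.lift_snd, pullback.lift_snd]
  have add_zero : ∀ {T : C} (a z : T ⟶ N.M) (hz : z = a ≫ N.φ ≫ N.unit)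
      (h : a ≫ N.φ = z ≫ N.φ), pullback.lift a z h ≫ N.add = a := by
    intro T a z hz h
    subst hz
    rw [N.add_comm, N.zero_add]
  have hc : ∀ {T : C} (a b : T ⟶ N.M) (h : a ≫ N.φ = b ≫ N.φ),
      a ≫ N.φ = (b ≫ N.neg) ≫ N.φ := by
    intro T a b h
    rw [Category.assoc, N.neg_φ, h]
  have hd : ∀ {T : C} (a b : T ⟶ N.M) (h : a ≫ N.φ = b ≫ N.φ),
      (pullback.lift a b h ≫ N.add) ≫ N.φ = b ≫ N.φ := by
    intro T a b h
    rw [Category.assoc, N.add_φ, ← Category.assoc, pullback.lift_fst, h]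
  have add_sub : ∀ {T : C} (a b : T ⟶ N.M) (h : a ≫ N.φ = b ≫ N.φ),
      pullback.lift (pullback.lift a b h ≫ N.add) (b ≫ N.neg) (hc _ _ (hd a b h)) ≫ N.add
        = a := by
    intro T a b h
    rw [N.add_assoc a b (b ≫ N.neg) h (hc _ _ rfl)]
    apply add_zero
    rw [N.add_neg, ← Category.assoc, ← Category.assoc, h]
  have sub_add : ∀ {T : C} (a b : T ⟶ N.M) (h : a ≫ N.φ = b ≫ N.φ),
      pullback.lift (pullback.lift a (b ≫ N.neg) (hc a b h) ≫ N.add) b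
        ((hd _ _ _).trans (hc _ _ rfl).symm) ≫ N.add = a := by
    intro T a b h
    rw [N.add_assoc a (b ≫ N.neg) b (hc a b h) (hc _ _ rfl).symm]
    apply add_zero
    rw [N.add_comm, N.add_neg, ← Category.assoc, ← Category.assoc, h]
  let p := pullback.fst N.φ N.φ
  let q := pullback.snd N.φ N.φ
  have hpq : p ≫ N.φ = q ≫ N.φ := pullback.condition
  have hadd : pullback.lift p q hpq ≫ N.add = N.add := by
    have : pullback.lift p q hpq = 𝟙 _ := by apply pullback.hom_ext <;> simp [p, q]
    rw [this, Category.id_comp]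
  refine ⟨pullback.lift (pullback.lift p (q ≫ N.neg) (hc p q hpq) ≫ N.add) q
    ((hd _ _ _).trans (hc _ _ rfl).symm), ?_, ?_⟩
  · apply pullback.hom_ext
    · rw [Category.assoc, pullback.lift_fst, ← Category.assoc, Category.id_comp]
      refine Eq.trans ?_ (add_sub p q hpq)
      congr 1
      apply pullback.hom_ext
      · rw [Category.assoc, pullback.lift_fst, pullback.lift_fst, pullback.lift_fst, hadd]
      · rw [Category.assoc, pullback.lift_snd, pullback.lift_snd, ← Category.assoc,
          pullback.lift_snd]
    · rw [Category.assoc, pullback.lift_snd, pullback.lift_snd, Category.id_comp]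
  · rw [key]
    apply pullback.hom_ext
    · rw [pullback.lift_fst, Category.id_comp]
      exact sub_add p q hpq
    · rw [pullback.lift_snd, Category.id_comp]

/-- Every Beck module is a torsor over itself. -/
def BeckModule.selfTorsor {C : Type u} [Category.{v} C] [HasPullbacks C] {Y : C}
    (N : BeckModule Y) : BeckTorsor N.φ where
  mod := N
  effEpi :=
    haveI : IsSplitEpi N.φ := ⟨⟨⟨N.unit, N.unit_φ⟩⟩⟩
    inferInstance
  τ := N.add
  τ_γ := by rw [N.add_φ, pullback.condition]
  act_unit := N.zero_add
  act_assoc := N.add_assoc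
  shear_iso := N.shear_isIso

/-- If `C` has Kähler differentials and `X` is formally unramified, then
`Ω_X = Ω(𝟙 X)` is an initial object of `Ab(C/X)`: for every Beck module `M` over `X`,
the set `Hom_{Ab(C/X)}(Ω_X, M)` has exactly one element. -/
theorem kaehler_initial_of_formallyUnramified {C : Type u} [Category.{v} C]
    [HasPullbacks C] (Ω : ∀ Y : C, Over Y ⥤ BeckModule Y)
    (adj : ∀ Y : C, Ω Y ⊣ forgetBeck Y) (X : C) (hX : FormallyUnramified X) :
    ∀ N : BeckModule X, Nonempty (Unique ((Ω X).obj (Over.mk (𝟙 X)) ⟶ N)) := by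
  intro N
  have hs : Subsingleton (Over.mk (𝟙 X) ⟶ (forgetBeck X).obj N) := by
    refine ⟨fun f g => ?_⟩
    apply Over.OverMorphism.ext
    apply hX N.φ N.selfTorsor
    exact (Over.w f).trans (Over.w g).symm
  let e := (adj X).homEquiv (Over.mk (𝟙 X)) N
  have := e.subsingleton
  exact ⟨⟨⟨e.symm (Over.homMk N.unit N.unit_φ)⟩, fun a => Subsingleton.elim _ _⟩⟩
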